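/- Let ℓ be a prime and let α ∈ ℚ be a rational number whose Ruban continued fraction expansion does not terminate. Then the sequence of convergents (p_n/q_n) of the expansion converges in ℝ (with respect to the usual archimedean absolute value). -/

import Mathlib

open Filter Topology
open scoped Classical

/-- `a` is the `ℓ`-adic integral part of the rational number `α`. -/
def IsRubanFloorQ (p : ℕ) (α a : ℚ) : Prop :=
  (∃ (m : ℤ) (k : ℕ), a = (m : ℚ) / (p : ℚ) ^ k) ∧ 0 ≤ a ∧ a < (p : ℚ) ∧
    padicNorm p (α - a) < 1

noncomputable def rubanFloorQ (p : ℕ) (α : ℚ) : ℚ :=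
  if h : ∃ a : ℚ, IsRubanFloorQ p α a then h.choose else 0

/-- Complete quotients of the Ruban continued fraction expansion of a rational number. -/
noncomputable def rubanCQQ (p : ℕ) (α : ℚ) : ℕ → ℚ
  | 0 => α
  | n + 1 => (rubanCQQ p α n - rubanFloorQ p (rubanCQQ p α n))⁻¹

/-- Partial quotients of the Ruban continued fraction expansion of a rational number. -/
noncomputable def rubanPQQ (p : ℕ) (α : ℚ) (n : ℕ) : ℚ :=
  rubanFloorQ p (rubanCQQ p α n)

/-- The Ruban continued fraction expansion of `α` terminates. -/
def RubanTerminatesQ (p : ℕ) (α : ℚ) : Prop :=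
  ∃ n, rubanCQQ p α n = rubanPQQ p α n

/-- Continued fraction numerators. -/
def cfNum {R : Type*} [CommRing R] (a : ℕ → R) : ℕ → R
  | 0 => 1
  | 1 => a 0
  | n + 2 => a (n + 1) * cfNum a (n + 1) + cfNum a n

/-- Continued fraction denominators. -/
def cfDen {R : Type*} [CommRing R] (a : ℕ → R) : ℕ → R
  | 0 => 0
  | 1 => 1
  | n + 2 => a (n + 1) * cfDen a (n + 1) + cfDen a n

/-!
The theorem is the combination of two facts about the partial quotients `aₙ` and the convergents
`pₙ / qₙ`.

* Seidel–Stern: a continued fraction with positive partial quotients of divergent sum converges in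
  `ℝ`. Indeed the convergents are the partial sums of an alternating series with terms
  `1 / (qₙ qₙ₊₁)`, and `qₙ qₙ₊₁` increases to infinity.

* Infinitely many partial quotients exceed `1`. The linear forms `eₙ = qₙ α - pₙ` are nonzero and
  satisfy `|eₙ|_ℓ ≤ ℓ⁻ⁿ`, and `den(α) eₙ` lies in `ℤ[1/ℓ]`, where `|y| |y|_ℓ ≥ 1` for `y ≠ 0`; hence
  `|eₙ|` grows at least like `ℓⁿ ≥ 2ⁿ`. If the partial quotients were eventually at most `1`, the
  recurrence `eₙ₊₂ = aₙ₊₁ eₙ₊₁ + eₙ` would bound `|eₙ|` by a multiple of `φⁿ`, where the golden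
  ratio `φ` is less than `2`.
-/

open Asymptotics Finset Real

section ContinuedFraction

section CommRing

variable {R S : Type*} [CommRing R] [CommRing S]

theorem map_cfNum (f : R →+* S) (a : ℕ → R) : ∀ n, f (cfNum a n) = cfNum (fun i ↦ f (a i)) n
  | 0 => map_one f
  | 1 => rfl
  | n + 2 => by simp only [cfNum, map_add, map_mul, map_cfNum f a n, map_cfNum f a (n + 1)]

theorem map_cfDen (f : R →+* S) (a : ℕ → R) : ∀ n, f (cfDen a n) = cfDen (fun i ↦ f (a i)) n
  | 0 => map_zero f
  | 1 => map_one f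
  | n + 2 => by simp only [cfDen, map_add, map_mul, map_cfDen f a n, map_cfDen f a (n + 1)]

theorem cfNum_mem {B : Type*} [SetLike B R] [SubringClass B R] {A : B} {a : ℕ → R}
    (ha : ∀ n, a n ∈ A) : ∀ n, cfNum a n ∈ A
  | 0 => one_mem A
  | 1 => ha 0
  | n + 2 => add_mem (mul_mem (ha _) (cfNum_mem ha (n + 1))) (cfNum_mem ha n)

theorem cfDen_mem {B : Type*} [SetLike B R] [SubringClass B R] {A : B} {a : ℕ → R}
    (ha : ∀ n, a n ∈ A) : ∀ n, cfDen a n ∈ A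
  | 0 => zero_mem A
  | 1 => one_mem A
  | n + 2 => add_mem (mul_mem (ha _) (cfDen_mem ha (n + 1))) (cfDen_mem ha n)

theorem cfNum_succ_mul_cfDen_sub (a : ℕ → R) (n : ℕ) :
    cfNum a (n + 1) * cfDen a n - cfNum a n * cfDen a (n + 1) = (-1) ^ (n + 1) := by
  induction n with
  | zero => simp [cfNum, cfDen]
  | succ n ih =>
    rw [cfNum, cfDen, pow_succ]
    linear_combination -ih

theorem cfDen_mul_cfDen_succ (a : ℕ → R) (n : ℕ) :
    cfDen a (n + 2) * cfDen a (n + 3) =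
      cfDen a (n + 1) * cfDen a (n + 2) + cfDen a (n + 2) ^ 2 * a (n + 2) := by
  have hrec : cfDen a (n + 3) = a (n + 2) * cfDen a (n + 2) + cfDen a (n + 1) := rfl
  rw [hrec]
  ring

/-- The linear form `qₙ x - pₙ`, the error of the convergent `pₙ / qₙ` to `x` scaled by `qₙ`. -/
def cfError (a : ℕ → R) (x : R) (n : ℕ) : R :=
  cfDen a n * x - cfNum a n

theorem cfError_zero (a : ℕ → R) (x : R) : cfError a x 0 = -1 := by
  simp [cfError, cfNum, cfDen]

theorem cfError_add_two (a : ℕ → R) (x : R) (n : ℕ) :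
    cfError a x (n + 2) = a (n + 1) * cfError a x (n + 1) + cfError a x n := by
  simp only [cfError, cfNum, cfDen]
  ring

theorem cfError_succ {a x : ℕ → R} (h : ∀ n, x (n + 1) * (x n - a n) = 1) (n : ℕ) :
    cfError a (x 0) (n + 1) = -((x n - a n) * cfError a (x 0) n) := by
  induction n with
  | zero => simp [cfError, cfNum, cfDen]
  | succ n ih =>
    rw [cfError_add_two]
    linear_combination x (n + 1) * ih - cfError a (x 0) n * h n

end CommRing

theorem cfNum_div_cfDen_eq_sum {K : Type*} [Field K] {a : ℕ → K}
    (ha : ∀ n, cfDen a (n + 1) ≠ 0) (n : ℕ) :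
    cfNum a (n + 1) / cfDen a (n + 1) =
      a 0 + ∑ i ∈ range n, (-1) ^ i * (cfDen a (i + 1) * cfDen a (i + 2))⁻¹ := by
  induction n with
  | zero => simp [cfNum, cfDen]
  | succ n ih =>
    have hdet := cfNum_succ_mul_cfDen_sub a (n + 1)
    have hn := ha n
    have hn' := ha (n + 1)
    rw [sum_range_succ, ← add_assoc, ← ih]
    field_simp
    linear_combination hdet

section Ordered

variable {R : Type*} [CommRing R] [LinearOrder R] [IsStrictOrderedRing R] {a : ℕ → R}

theorem min_one_le_cfDen_succ (ha : ∀ n, 0 < a (n + 1)) : ∀ n, min 1 (a 1) ≤ cfDen a (n + 1)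
  | 0 => min_le_left _ _
  | 1 => by simp [cfDen]
  | n + 2 => by
    have hpos : 0 < cfDen a (n + 2) :=
      (lt_min one_pos (ha 0)).trans_le (min_one_le_cfDen_succ ha (n + 1))
    rw [cfDen]
    exact (min_one_le_cfDen_succ ha n).trans (le_add_of_nonneg_left (mul_pos (ha _) hpos).le)

theorem cfDen_succ_pos (ha : ∀ n, 0 < a (n + 1)) (n : ℕ) : 0 < cfDen a (n + 1) :=
  (lt_min one_pos (ha 0)).trans_le (min_one_le_cfDen_succ ha n)

theorem monotone_cfDen_mul_cfDen (ha : ∀ n, 0 < a (n + 1)) :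
    Monotone fun n ↦ cfDen a (n + 1) * cfDen a (n + 2) :=
  monotone_nat_of_le_succ fun n ↦ by
    rw [cfDen_mul_cfDen_succ]
    exact le_add_of_nonneg_right (mul_nonneg (sq_nonneg _) (ha _).le)

theorem mul_sum_le_cfDen_mul_cfDen (ha : ∀ n, 0 < a (n + 1)) (n : ℕ) :
    min 1 (a 1) ^ 2 * ∑ i ∈ range n, a (i + 2) ≤ cfDen a (n + 1) * cfDen a (n + 2) := by
  induction n with
  | zero => simpa [cfDen] using (ha 0).le
  | succ n ih =>
    rw [sum_range_succ, mul_add, cfDen_mul_cfDen_succ]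
    have hmin : 0 ≤ min 1 (a 1) := (lt_min one_pos (ha 0)).le
    have ha' := (ha (n + 1)).le
    gcongr
    exact min_one_le_cfDen_succ ha (n + 1)

end Ordered

variable {a : ℕ → ℝ}

theorem tendsto_cfDen_mul_cfDen_atTop (ha : ∀ n, 0 < a (n + 1)) (hsum : ¬ Summable a) :
    Tendsto (fun n ↦ cfDen a (n + 1) * cfDen a (n + 2)) atTop atTop := by
  have hsum_shift : Tendsto (fun n ↦ ∑ i ∈ range n, a (i + 2)) atTop atTop :=
    (not_summable_iff_tendsto_nat_atTop_of_nonneg fun n ↦ (ha (n + 1)).le).1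
      (mt (summable_nat_add_iff 2).1 hsum)
  have hmin : 0 < min 1 (a 1) ^ 2 := pow_pos (lt_min one_pos (ha 0)) 2
  exact tendsto_atTop_mono (mul_sum_le_cfDen_mul_cfDen ha) (hsum_shift.const_mul_atTop hmin)

theorem exists_tendsto_cfNum_div_cfDen (ha : ∀ n, 0 < a (n + 1)) (hsum : ¬ Summable a) :
    ∃ L : ℝ, Tendsto (fun n ↦ cfNum a n / cfDen a n) atTop (𝓝 L) := by
  have hanti : Antitone fun n ↦ (cfDen a (n + 1) * cfDen a (n + 2))⁻¹ := fun m n hmn ↦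
    inv_anti₀ (mul_pos (cfDen_succ_pos ha m) (cfDen_succ_pos ha (m + 1)))
      (monotone_cfDen_mul_cfDen ha hmn)
  obtain ⟨l, hl⟩ := hanti.tendsto_alternating_series_of_tendsto_zero
    (tendsto_cfDen_mul_cfDen_atTop ha hsum).inv_tendsto_atTop
  refine ⟨a 0 + l, (tendsto_add_atTop_iff_nat 1).1 ((hl.const_add (a 0)).congr fun n ↦ ?_)⟩
  exact (cfNum_div_cfDen_eq_sum (fun n ↦ (cfDen_succ_pos ha n).ne') n).symm

end ContinuedFraction

theorem isBigO_goldenRatio_pow {E : Type*} [Norm E] {f : ℕ → E}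
    (hf : ∀ᶠ n in atTop, ‖f (n + 2)‖ ≤ ‖f (n + 1)‖ + ‖f n‖) :
    f =O[atTop] fun n ↦ goldenRatio ^ n := by
  obtain ⟨N, hN⟩ := eventually_atTop.1 hf
  set C := max (max ‖f N‖ ‖f (N + 1)‖) 0
  have hC : 0 ≤ C := le_max_right _ _
  have hbound (k : ℕ) : ‖f (N + k)‖ ≤ C * goldenRatio ^ k := by
    induction k using Nat.twoStepInduction with
    | zero => simp [C]
    | one =>
      have hφ : C ≤ C * goldenRatio := le_mul_of_one_le_right hC one_lt_goldenRatio.le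
      simpa using (le_max_of_le_left (le_max_right _ _)).trans hφ
    | more k ih ih' =>
      calc ‖f (N + k + 2)‖ ≤ ‖f (N + k + 1)‖ + ‖f (N + k)‖ := hN _ (Nat.le_add_right N k)
        _ ≤ C * goldenRatio ^ (k + 1) + C * goldenRatio ^ k := add_le_add ih' ih
        _ = C * goldenRatio ^ (k + 2) := by rw [pow_add _ k 2, goldenRatio_sq]; ring
  refine .of_bound C (eventually_atTop.2 ⟨N, fun n hn ↦ ?_⟩)
  obtain ⟨k, rfl⟩ := Nat.exists_eq_add_of_le hn
  rw [norm_of_nonneg (pow_nonneg goldenRatio_pos.le _)]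
  exact (hbound k).trans (mul_le_mul_of_nonneg_left
    (pow_le_pow_right₀ one_lt_goldenRatio.le (Nat.le_add_left k N)) hC)

section Padic

variable {p : ℕ} [hp : Fact p.Prime]

theorem padicNorm_le_inv_of_lt_one {x : ℚ} (hx : padicNorm p x < 1) :
    padicNorm p x ≤ (p : ℚ)⁻¹ := by
  have h := (Padic.norm_le_pow_iff_norm_lt_pow_add_one (x : ℚ_[p]) (-1)).2
    (by simpa [Padic.eq_padicNorm] using mod_cast hx)
  rw [Padic.eq_padicNorm, zpow_neg_one] at h
  exact Rat.cast_le.1 (by simpa using h)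

theorem one_le_abs_mul_padicNorm_intCast {m : ℤ} (hm : m ≠ 0) :
    1 ≤ |(m : ℚ)| * padicNorm p m := by
  have hp0 : (0 : ℚ) < p := mod_cast hp.out.pos
  have hle : (p : ℚ) ^ padicValInt p m ≤ |(m : ℚ)| := mod_cast
    Int.le_of_dvd (abs_pos.2 hm) ((dvd_abs _ _).2 (padicValInt_dvd m))
  rw [padicNorm.eq_zpow_of_nonzero (Int.cast_ne_zero.2 hm), padicValRat.of_int, zpow_neg,
    zpow_natCast]
  exact (le_mul_inv_iff₀ (pow_pos hp0 _)).2 (by rwa [one_mul])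

variable (p) in
/-- The ring `ℤ[1/p]`, as a subalgebra of `ℚ`. -/
noncomputable def zInv : Subalgebra ℤ ℚ :=
  Localization.subalgebra.ofField ℚ (.powers (p : ℤ))
    (powers_le_nonZeroDivisors_of_noZeroDivisors (mod_cast hp.out.ne_zero))

theorem mem_zInv {x : ℚ} : x ∈ zInv p ↔ ∃ (m : ℤ) (k : ℕ), x = m / (p : ℚ) ^ k := by
  constructor
  · rintro ⟨m, _, ⟨k, rfl⟩, rfl⟩
    exact ⟨m, k, by simp [div_eq_mul_inv]⟩
  · rintro ⟨m, k, rfl⟩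
    exact ⟨m, p ^ k, ⟨k, rfl⟩, by simp [div_eq_mul_inv]⟩

theorem one_le_abs_mul_padicNorm {x : ℚ} (hx : x ∈ zInv p) (hx0 : x ≠ 0) :
    1 ≤ |x| * padicNorm p x := by
  obtain ⟨m, k, rfl⟩ := mem_zInv.1 hx
  have hm : m ≠ 0 := by
    rintro rfl
    simp at hx0
  have hpk : |(p : ℚ) ^ k| * padicNorm p ((p : ℚ) ^ k) = 1 := by
    have hp0 : (p : ℚ) ≠ 0 := mod_cast hp.out.ne_zero
    rw [abs_pow, Nat.abs_cast, IsAbsoluteValue.abv_pow (padicNorm p),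
      padicNorm.padicNorm_p_of_prime, ← mul_pow, mul_inv_cancel₀ hp0, one_pow]
  calc 1 ≤ |(m : ℚ)| * padicNorm p m := one_le_abs_mul_padicNorm_intCast hm
    _ = |(m : ℚ)| * padicNorm p m / (|(p : ℚ) ^ k| * padicNorm p ((p : ℚ) ^ k)) := by
      rw [hpk, div_one]
    _ = |m / (p : ℚ) ^ k| * padicNorm p (m / (p : ℚ) ^ k) := by
      rw [abs_div, padicNorm.div, div_mul_div_comm]

variable (p) in
/-- `a` and `x` are the partial and the complete quotients of a nonterminating `p`-adic continued
fraction expansion of `x 0 ∈ ℚ` whose partial quotients lie in `ℤ[1/p]`. The choice of residues is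
left open, so that Browkin's expansions are covered as well as Ruban's. -/
structure IsPadicCF (a x : ℕ → ℚ) : Prop where
  mem_zInv : ∀ n, a n ∈ zInv p
  padicNorm_sub_lt_one : ∀ n, padicNorm p (x n - a n) < 1
  mul_sub_eq_one : ∀ n, x (n + 1) * (x n - a n) = 1

namespace IsPadicCF

variable {a x : ℕ → ℚ}

theorem sub_ne_zero (h : IsPadicCF p a x) (n : ℕ) : x n - a n ≠ 0 :=
  right_ne_zero_of_mul_eq_one (h.mul_sub_eq_one n)

theorem one_lt_padicNorm_succ (h : IsPadicCF p a x) (n : ℕ) : 1 < padicNorm p (x (n + 1)) := by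
  have hpos : 0 < padicNorm p (x n - a n) :=
    (padicNorm.nonneg _).lt_of_ne' (padicNorm.nonzero (h.sub_ne_zero n))
  rw [eq_inv_of_mul_eq_one_left (h.mul_sub_eq_one n), ← one_div, padicNorm.div, padicNorm.one,
    one_lt_div hpos]
  exact h.padicNorm_sub_lt_one n

theorem partialQuot_succ_ne_zero (h : IsPadicCF p a x) (n : ℕ) : a (n + 1) ≠ 0 := fun h0 ↦ by
  have hlt := h.padicNorm_sub_lt_one (n + 1)
  rw [h0, sub_zero] at hlt
  exact (h.one_lt_padicNorm_succ n).not_gt hlt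

theorem cfError_ne_zero (h : IsPadicCF p a x) (n : ℕ) : cfError a (x 0) n ≠ 0 := by
  induction n with
  | zero => simp [cfError_zero]
  | succ n ih =>
    rw [cfError_succ h.mul_sub_eq_one]
    exact neg_ne_zero.2 (mul_ne_zero (h.sub_ne_zero n) ih)

theorem padicNorm_cfError_le (h : IsPadicCF p a x) (n : ℕ) :
    padicNorm p (cfError a (x 0) n) ≤ (p : ℚ)⁻¹ ^ n := by
  induction n with
  | zero => simp [cfError_zero]
  | succ n ih =>
    rw [cfError_succ h.mul_sub_eq_one, padicNorm.neg, padicNorm.mul, pow_succ']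
    exact mul_le_mul (padicNorm_le_inv_of_lt_one (h.padicNorm_sub_lt_one n)) ih
      (padicNorm.nonneg _) (by positivity)

theorem den_mul_cfError_mem (h : IsPadicCF p a x) (n : ℕ) :
    (x 0).den * cfError a (x 0) n ∈ zInv p := by
  have hclear : (x 0).den * cfError a (x 0) n =
      cfDen a n * (x 0).num - (x 0).den * cfNum a n := by
    rw [cfError, ← Rat.mul_den_eq_num]
    ring
  rw [hclear]
  exact sub_mem (mul_mem (cfDen_mem h.mem_zInv n) (intCast_mem _ _))
    (mul_mem (natCast_mem _ _) (cfNum_mem h.mem_zInv n))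

theorem pow_le_abs_cfError (h : IsPadicCF p a x) (n : ℕ) :
    (p : ℚ) ^ n ≤ (x 0).den * |cfError a (x 0) n| := by
  have hp0 : (0 : ℚ) < p := mod_cast hp.out.pos
  set e := cfError a (x 0) n
  have hden : ((x 0).den : ℚ) ≠ 0 := mod_cast (x 0).den_nz
  have hnorm : padicNorm p ((x 0).den * e) ≤ ((p : ℚ) ^ n)⁻¹ := by
    rw [padicNorm.mul, ← inv_pow]
    exact (mul_le_of_le_one_left (padicNorm.nonneg _) (padicNorm.of_nat _)).trans
      (h.padicNorm_cfError_le n)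
  have hprod : 1 ≤ |(x 0).den * e| * ((p : ℚ) ^ n)⁻¹ :=
    (one_le_abs_mul_padicNorm (h.den_mul_cfError_mem n)
      (mul_ne_zero hden (h.cfError_ne_zero n))).trans (by gcongr)
  rwa [le_mul_inv_iff₀ (pow_pos hp0 n), one_mul, abs_mul, Nat.abs_cast] at hprod

theorem two_pow_isBigO_cfError (h : IsPadicCF p a x) :
    (fun n ↦ (2 : ℝ) ^ n) =O[atTop] cfError a (x 0) :=
  .of_bound (x 0).den <| .of_forall fun n ↦ by
    have hle : (p : ℝ) ^ n ≤ (x 0).den * |((cfError a (x 0) n : ℚ) : ℝ)| :=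
      mod_cast h.pow_le_abs_cfError n
    have h2 : (2 : ℝ) ≤ p := mod_cast hp.out.two_le
    rw [norm_of_nonneg (by positivity), ← Rat.norm_cast_real, norm_eq_abs]
    exact (pow_le_pow_left₀ zero_le_two h2 n).trans hle

theorem frequently_one_lt_abs (h : IsPadicCF p a x) : ∃ᶠ n in atTop, 1 < |a n| := by
  intro hle
  have hsub : ∀ᶠ n in atTop, ‖cfError a (x 0) (n + 2)‖ ≤
      ‖cfError a (x 0) (n + 1)‖ + ‖cfError a (x 0) n‖ := by
    filter_upwards [(tendsto_add_atTop_nat 1).eventually hle] with n hn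
    have ha : ‖a (n + 1)‖ ≤ 1 := by
      rw [← Rat.norm_cast_real, norm_eq_abs]
      exact_mod_cast not_lt.1 hn
    rw [cfError_add_two]
    refine (norm_add_le _ _).trans (add_le_add_left ?_ _)
    rw [norm_mul]
    exact mul_le_of_le_one_left (norm_nonneg _) ha
  have hlittle : (fun n ↦ (2 : ℝ) ^ n) =o[atTop] fun n ↦ (2 : ℝ) ^ n :=
    (h.two_pow_isBigO_cfError.trans (isBigO_goldenRatio_pow hsub)).trans_isLittleO
      (isLittleO_pow_pow_of_lt_left goldenRatio_pos.le goldenRatio_lt_two)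
  exact isLittleO_irrefl (Frequently.of_forall fun n ↦ pow_ne_zero n two_ne_zero) hlittle

theorem not_summable (h : IsPadicCF p a x) : ¬ Summable fun n ↦ (a n : ℝ) := fun hsum ↦ by
  have hsmall : ∀ᶠ n in atTop, |(a n : ℝ)| < 1 :=
    hsum.tendsto_atTop_zero.abs.eventually_lt_const (by simp)
  obtain ⟨n, hn, hn'⟩ := (h.frequently_one_lt_abs.and_eventually hsmall).exists
  exact hn.not_gt (mod_cast hn')

end IsPadicCF

theorem exists_norm_sub_natCast_div_pow_lt_one (x : ℚ_[p]) :
    ∃ m k : ℕ, m < p ^ (k + 1) ∧ ‖x - m / (p : ℚ_[p]) ^ k‖ < 1 := by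
  have hp1 : (1 : ℝ) < p := mod_cast hp.out.one_lt
  have hp0 : (p : ℚ_[p]) ≠ 0 := mod_cast hp.out.ne_zero
  obtain ⟨k, hk⟩ := pow_unbounded_of_one_lt ‖x‖ hp1
  have hpk : (0 : ℝ) < (p : ℝ) ^ k := pow_pos (one_pos.trans hp1) k
  have hint : ‖x * (p : ℚ_[p]) ^ k‖ ≤ 1 := by
    rw [norm_mul, Padic.norm_p_pow, zpow_neg, zpow_natCast, mul_inv_le_iff₀ hpk, one_mul]
    exact hk.le
  let y : ℤ_[p] := ⟨x * (p : ℚ_[p]) ^ k, hint⟩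
  have happr : ‖x * (p : ℚ_[p]) ^ k - y.appr (k + 1)‖ ≤ (p : ℝ) ^ (-(k + 1 : ℕ) : ℤ) := by
    have hy := ((y - y.appr (k + 1)).norm_le_pow_iff_mem_span_pow (k + 1)).2 (y.appr_spec (k + 1))
    rwa [PadicInt.norm_def, PadicInt.coe_sub, PadicInt.coe_natCast] at hy
  refine ⟨y.appr (k + 1), k, y.appr_lt (k + 1), ?_⟩
  have hscale : x - y.appr (k + 1) / (p : ℚ_[p]) ^ k =
      (x * (p : ℚ_[p]) ^ k - y.appr (k + 1)) / (p : ℚ_[p]) ^ k := by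
    field_simp
  calc ‖x - y.appr (k + 1) / (p : ℚ_[p]) ^ k‖
      = ‖x * (p : ℚ_[p]) ^ k - y.appr (k + 1)‖ * (p : ℝ) ^ k := by
        rw [hscale, norm_div, Padic.norm_p_pow, zpow_neg, zpow_natCast, div_inv_eq_mul]
    _ ≤ ((p : ℝ) ^ (k + 1))⁻¹ * (p : ℝ) ^ k := by
        rw [zpow_neg, zpow_natCast] at happr
        gcongr
    _ < 1 := by
        rw [inv_mul_lt_one₀ (pow_pos (one_pos.trans hp1) _)]
        exact pow_lt_pow_right₀ hp1 k.lt_succ_self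

end Padic

section Ruban

variable {p : ℕ} [hp : Fact p.Prime] {α : ℚ}

variable (p α) in
theorem exists_isRubanFloorQ : ∃ a, IsRubanFloorQ p α a := by
  have hp0 : (0 : ℚ) < p := mod_cast hp.out.pos
  obtain ⟨m, k, hm, hnorm⟩ := exists_norm_sub_natCast_div_pow_lt_one (p := p) α
  refine ⟨m / p ^ k, ⟨m, k, by simp⟩, by positivity, ?_, ?_⟩
  · rw [div_lt_iff₀ (pow_pos hp0 k), ← pow_succ']
    exact_mod_cast hm
  · have hcast : ‖((α - m / p ^ k : ℚ) : ℚ_[p])‖ < 1 := by simpa using hnorm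
    rw [Padic.eq_padicNorm] at hcast
    exact_mod_cast hcast

variable (p α) in
theorem isRubanFloorQ_rubanFloorQ : IsRubanFloorQ p α (rubanFloorQ p α) := by
  rw [rubanFloorQ, dif_pos (exists_isRubanFloorQ p α)]
  exact (exists_isRubanFloorQ p α).choose_spec

theorem isPadicCF_ruban (hα : ¬ RubanTerminatesQ p α) :
    IsPadicCF p (rubanPQQ p α) (rubanCQQ p α) where
  mem_zInv n := mem_zInv.2 (isRubanFloorQ_rubanFloorQ p (rubanCQQ p α n)).1
  padicNorm_sub_lt_one n := (isRubanFloorQ_rubanFloorQ p (rubanCQQ p α n)).2.2.2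
  mul_sub_eq_one n := inv_mul_cancel₀ (sub_ne_zero.2 fun h ↦ hα ⟨n, h⟩)

theorem rubanPQQ_succ_pos (hα : ¬ RubanTerminatesQ p α) (n : ℕ) : 0 < rubanPQQ p α (n + 1) :=
  (isRubanFloorQ_rubanFloorQ p (rubanCQQ p α (n + 1))).2.1.lt_of_ne'
    ((isPadicCF_ruban hα).partialQuot_succ_ne_zero n)

end Ruban

open Filter Topology in
/-- The convergents of the (non-terminating) Ruban continued fraction
expansion of a rational number converge in `ℝ`. -/
theorem ruban_rational_convergents_converge_in_R
    (ℓ : ℕ) (hℓ : ℓ.Prime) (α : ℚ) (hnt : ¬ RubanTerminatesQ ℓ α) :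
    ∃ L : ℝ, Tendsto
      (fun n : ℕ => ((cfNum (rubanPQQ ℓ α) n / cfDen (rubanPQQ ℓ α) n : ℚ) : ℝ))
      atTop (𝓝 L) := by
  have : Fact ℓ.Prime := ⟨hℓ⟩
  have hpos (n : ℕ) : (0 : ℝ) < rubanPQQ ℓ α (n + 1) := mod_cast rubanPQQ_succ_pos hnt n
  obtain ⟨L, hL⟩ := exists_tendsto_cfNum_div_cfDen hpos (isPadicCF_ruban hnt).not_summable
  refine ⟨L, hL.congr fun n ↦ ?_⟩
  rw [Rat.cast_div]
  exact (congrArg₂ _ (map_cfNum (Rat.castHom ℝ) _ n) (map_cfDen (Rat.castHom ℝ) _ n)).symm
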